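/- Let n be odd and squarefree, let p' be a prime divisor of n, and let A = L(n;p'). Let S = (x_1,…,x_l) be a sequence in Z_n such that for every prime divisor p of n at least two terms of S are coprime to p. Let n' = n/p' and let S' be the image of S under the natural map Z_n → Z_{n'}. If at most one term of S' is a unit of Z_{n'}, then S is an A-weighted zero-sum sequence. -/

import Mathlib

open scoped BigOperators

/-- `S` is an `A`-weighted zero-sum sequence in `ZMod n`. -/
def IsWZS {n : ℕ} (A : Set (ZMod n)) {l : ℕ} (S : Fin l → ZMod n) : Prop :=
  ∃ a : Fin l → ZMod n, (∀ i, a i ∈ A) ∧ ∑ i, a i * S i = 0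

/-- `S` has a nonempty subsequence which is an `A`-weighted zero-sum sequence. -/
def HasWZSSub {n : ℕ} (A : Set (ZMod n)) {l : ℕ} (S : Fin l → ZMod n) : Prop :=
  ∃ I : Finset (Fin l), I.Nonempty ∧ ∃ a : Fin l → ZMod n,
    (∀ i ∈ I, a i ∈ A) ∧ ∑ i ∈ I, a i * S i = 0

/-- The `A`-weighted Davenport constant of `ZMod n`: the least positive integer `k`
such that every sequence of `k` elements of `ZMod n` has a nonempty subsequence
which is an `A`-weighted zero-sum sequence. -/
noncomputable def DavW (n : ℕ) (A : Set (ZMod n)) : ℕ :=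
  sInf {k | 0 < k ∧ ∀ S : Fin k → ZMod n, HasWZSSub A S}

/-- An `A`-extremal sequence for the Davenport constant: a sequence of length
`D_A(n) - 1` with no nonempty `A`-weighted zero-sum subsequence. -/
def IsExtremal (n : ℕ) (A : Set (ZMod n)) {l : ℕ} (S : Fin l → ZMod n) : Prop :=
  l = DavW n A - 1 ∧ ¬ HasWZSSub A S

/-- The set of units of `ZMod n`, as a weight set. -/
def USet (n : ℕ) : Set (ZMod n) := {a | IsUnit a}

/-- `S(n)`: the units `a` of `ZMod n` with Jacobi symbol `(a/n) = 1`. -/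
def JSet (n : ℕ) : Set (ZMod n) := {a | IsUnit a ∧ jacobiSym (a.val : ℤ) n = 1}

/-- `L(n;p)`: the units `a` of `ZMod n` with `(a/n) = (a/p)`. -/
def LSet (n p : ℕ) : Set (ZMod n) :=
  {a | IsUnit a ∧ jacobiSym (a.val : ℤ) n = jacobiSym (a.val : ℤ) p}

/-- Two sequences are equivalent with respect to the weight set `A`. -/
def EquivWrt {n : ℕ} (A : Set (ZMod n)) {k : ℕ} (x y : Fin k → ZMod n) : Prop :=
  ∃ (a : Fin k → ZMod n) (c : (ZMod n)ˣ) (σ : Equiv.Perm (Fin k)),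
    (∀ i, a i ∈ A) ∧ ∀ i, y (σ i) = (c : ZMod n) * (a i * x i)

/-!
In a field of characteristic other than two, two nonzero terms `x i`, `x j` suffice to cancel any
sum, since every element is a sum of two nonzero ones. In a semilocal ring, the Chinese remainder
theorem glues such weights, one family per maximal ideal, into unit weights whose weighted sum lies
in the Jacobson radical; as the terms generate the unit ideal, the weights can then be corrected
within the Jacobson radical to make the sum vanish.

Put `χ = (· / (n / d))`, with `d = p'` in the theorem, so that a unit `a` lies in `L(n;d)` as soon
as `χ a = 1`. A term divisible by a prime factor `p` of `n / d` is fixed by some unit `u` with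
`χ u = -1`, so the sign of `χ` on its weight can be flipped at will. At most one term remains, and
scaling all the weights by the inverse of its weight makes that one `1`.
-/

section UnitWeights

variable {ι : Type*} [Fintype ι]

theorem exists_ne_zero_and_ne_zero_and_add_eq {K : Type*} [Field K] (h2 : (2 : K) ≠ 0) (c : K) :
    ∃ y z : K, y ≠ 0 ∧ z ≠ 0 ∧ y + z = c := by
  by_cases hc : c = 1
  · exact ⟨-1, 2, neg_ne_zero.2 one_ne_zero, h2, by rw [hc]; norm_num⟩
  · exact ⟨1, c - 1, one_ne_zero, sub_ne_zero.2 hc, by ring⟩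

theorem exists_ne_zero_weights_sum_eq_zero {K : Type*} [Field K] (h2 : (2 : K) ≠ 0) (x : ι → K)
    (hx : {i | x i ≠ 0}.Nontrivial) :
    ∃ a : ι → K, (∀ i, a i ≠ 0) ∧ ∑ i, a i * x i = 0 := by
  classical
  obtain ⟨i, hi, j, hj, hij⟩ := hx
  obtain ⟨y, z, hy, hz, hyz⟩ :=
    exists_ne_zero_and_ne_zero_and_add_eq h2 (-∑ k ∈ {i, j}ᶜ, x k)
  let a : ι → K := fun k => if k = i then y / x i else if k = j then z / x j else 1
  have hai : a i * x i = y := by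
    simp only [a, if_true]
    exact div_mul_cancel₀ y hi
  have haj : a j * x j = z := by
    simp only [a, if_neg hij.symm, if_true]
    exact div_mul_cancel₀ z hj
  have ha_rest : ∑ k ∈ {i, j}ᶜ, a k * x k = ∑ k ∈ {i, j}ᶜ, x k := by
    refine Finset.sum_congr rfl fun k hk => ?_
    obtain ⟨hki, hkj⟩ : k ≠ i ∧ k ≠ j := by simpa using hk
    simp only [a, if_neg hki, if_neg hkj, one_mul]
  refine ⟨a, fun k => ?_, ?_⟩
  · simp only [a]
    split_ifs
    exacts [div_ne_zero hy hi, div_ne_zero hz hj, one_ne_zero]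
  · rw [← Finset.sum_add_sum_compl {i, j}, Finset.sum_pair hij, hai, haj, ha_rest, hyz,
      neg_add_cancel]

variable {R : Type*} [CommRing R]

theorem isUnit_of_forall_isMaximal_notMem {r : R} (h : ∀ M : Ideal R, M.IsMaximal → r ∉ M) :
    IsUnit r := by
  by_contra hr
  obtain ⟨M, hM, hrM⟩ := exists_max_ideal_of_mem_nonunits hr
  exact h M hM hrM

theorem exists_sum_mul_eq_one_of_forall_isMaximal (x : ι → R)
    (hx : ∀ M : Ideal R, M.IsMaximal → ∃ i, x i ∉ M) : ∃ c : ι → R, ∑ i, c i * x i = 1 := by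
  rw [← Ideal.mem_span_range_iff_exists_fun, ← Ideal.eq_top_iff_one]
  by_contra hspan
  obtain ⟨M, hM, hle⟩ := Ideal.exists_le_maximal _ hspan
  obtain ⟨i, hi⟩ := hx M hM
  exact hi (hle (Ideal.subset_span ⟨i, rfl⟩))

variable [Finite (MaximalSpectrum R)]

theorem exists_weights_forall_isMaximal_notMem_and_sum_mem (h2 : IsUnit (2 : R)) (x : ι → R)
    (hx : ∀ M : Ideal R, M.IsMaximal → {i | x i ∉ M}.Nontrivial) :
    ∃ b : ι → R, ∀ M : Ideal R, M.IsMaximal → (∀ i, b i ∉ M) ∧ ∑ i, b i * x i ∈ M := by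
  have residue_weights (M : MaximalSpectrum R) :
      ∃ a : ι → R ⧸ M.asIdeal, (∀ i, a i ≠ 0) ∧
        ∑ i, a i * Ideal.Quotient.mk M.asIdeal (x i) = 0 := by
    let := Ideal.Quotient.field M.asIdeal
    refine exists_ne_zero_weights_sum_eq_zero ?_ _ ?_
    · rw [← map_ofNat (Ideal.Quotient.mk M.asIdeal)]
      exact (h2.map _).ne_zero
    · simpa only [ne_eq, Ideal.Quotient.eq_zero_iff_mem] using hx M.asIdeal M.isMaximal
  choose a ha ha_sum using residue_weights
  choose b hb using fun i => Ideal.pi_quotient_surjective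
    (fun _ _ hMN => MaximalSpectrum.isCoprime_of_ne hMN) fun M => a M i
  refine ⟨b, fun M hM => ⟨fun i => ?_, ?_⟩⟩
  · rw [← Ideal.Quotient.eq_zero_iff_mem, hb i ⟨M, hM⟩]
    exact ha ⟨M, hM⟩ i
  · rw [← Ideal.Quotient.eq_zero_iff_mem, map_sum, ← ha_sum ⟨M, hM⟩]
    simp only [map_mul, hb _ ⟨M, hM⟩]

theorem exists_units_sum_smul_eq_zero (h2 : IsUnit (2 : R)) (x : ι → R)
    (hx : ∀ M : Ideal R, M.IsMaximal → {i | x i ∉ M}.Nontrivial) :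
    ∃ a : ι → Rˣ, ∑ i, a i • x i = 0 := by
  obtain ⟨b, hb⟩ := exists_weights_forall_isMaximal_notMem_and_sum_mem h2 x hx
  obtain ⟨c, hc⟩ := exists_sum_mul_eq_one_of_forall_isMaximal x fun M hM => (hx M hM).nonempty
  set s := ∑ i, b i * x i with hs
  have isUnit_corrected (i : ι) : IsUnit (b i - s * c i) := by
    refine isUnit_of_forall_isMaximal_notMem fun M hM hmem => (hb M hM).1 i ?_
    exact (Submodule.sub_mem_iff_left M (M.mul_mem_right (c i) (hb M hM).2)).1 hmem
  refine ⟨fun i => (isUnit_corrected i).unit, ?_⟩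
  calc ∑ i, (b i - s * c i) * x i = s - s * ∑ i, c i * x i := by
        simp only [sub_mul, mul_assoc, Finset.sum_sub_distrib, Finset.mul_sum, hs]
    _ = 0 := by rw [hc, mul_one, sub_self]

end UnitWeights

theorem exists_map_eq_one_and_sum_smul_eq_zero {Γ G M ι : Type*} [Group Γ] [Group G]
    [AddCommMonoid M] [DistribMulAction Γ M] [Fintype ι] (χ : Γ →* G) (x : ι → M)
    (hx : {i | (MulAction.stabilizer Γ (x i)).map χ ≠ ⊤}.Subsingleton)
    (a : ι → Γ) (ha : ∑ i, a i • x i = 0) :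
    ∃ b : ι → Γ, (∀ i, χ (b i) = 1) ∧ ∑ i, b i • x i = 0 := by
  obtain ⟨c, hc⟩ : ∃ c : Γ, ∀ i, (MulAction.stabilizer Γ (x i)).map χ ≠ ⊤ → χ (c * a i) = 1 := by
    rcases hx.eq_empty_or_singleton with h | ⟨k, h⟩
    · exact ⟨1, fun i hi => (h.subset hi).elim⟩
    · refine ⟨(a k)⁻¹, fun i hi => ?_⟩
      rw [Set.mem_singleton_iff.1 (h.subset hi), inv_mul_cancel, map_one]
  have exists_fixing (i : ι) : ∃ u : Γ, u • x i = x i ∧ χ (c * a i * u) = 1 := by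
    by_cases hi : (MulAction.stabilizer Γ (x i)).map χ = ⊤
    · obtain ⟨u, hu, hχu⟩ : (χ (c * a i))⁻¹ ∈ (MulAction.stabilizer Γ (x i)).map χ :=
        hi ▸ Subgroup.mem_top _
      exact ⟨u, hu, by rw [map_mul, hχu, mul_inv_cancel]⟩
    · exact ⟨1, one_smul Γ _, by rw [mul_one, hc i hi]⟩
  choose u hu hχ using exists_fixing
  refine ⟨fun i => c * a i * u i, hχ, ?_⟩
  simp only [mul_smul, hu, ← Finset.smul_sum, ha, smul_zero]

/-- The Jacobi symbol `(· / m)` as a multiplicative map on `ZMod m`, evaluated on the representative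
`a.val`; for `m = 0` it is constantly `1`. -/
def jacobiHom (m : ℕ) : ZMod m →* ℤ where
  toFun a := jacobiSym a.val m
  map_one' := by
    rw [← Nat.cast_one (R := ZMod m), ZMod.val_natCast, Int.natCast_mod, ← jacobiSym.mod_left,
      Nat.cast_one, jacobiSym.one_left]
  map_mul' a b := by
    rw [ZMod.val_mul, Int.natCast_mod, ← jacobiSym.mod_left, Nat.cast_mul, jacobiSym.mul_left]

theorem jacobiHom_natCast (m a : ℕ) : jacobiHom m (a : ZMod m) = jacobiSym a m := by
  change jacobiSym (a : ZMod m).val m = jacobiSym a m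
  rw [ZMod.val_natCast, Int.natCast_mod, ← jacobiSym.mod_left]

/-- The Jacobi symbol `(· / m)` as a quadratic character of the units of `ZMod n`, where `m ∣ n`. -/
def jacobiUnitsHom {m n : ℕ} (h : m ∣ n) : (ZMod n)ˣ →* ℤˣ :=
  (Units.map (jacobiHom m)).comp (ZMod.unitsMap h)

theorem coe_jacobiUnitsHom {m n : ℕ} [NeZero n] (h : m ∣ n) (a : (ZMod n)ˣ) :
    (jacobiUnitsHom h a : ℤ) = jacobiSym (a : ZMod n).val m := by
  rw [← jacobiHom_natCast, ZMod.natCast_val]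
  rfl

theorem mem_LSet_of_jacobiUnitsHom_eq_one {n d : ℕ} [NeZero n] (hd : d ∣ n) (a : (ZMod n)ˣ)
    (ha : jacobiUnitsHom (Nat.div_dvd_of_dvd hd) a = 1) : (a : ZMod n) ∈ LSet n d := by
  have hm : jacobiSym (a : ZMod n).val (n / d) = 1 := by
    rw [← coe_jacobiUnitsHom (Nat.div_dvd_of_dvd hd), ha, Units.val_one]
  have hn : n / d * d ≠ 0 := by rw [Nat.div_mul_cancel hd]; exact NeZero.ne n
  have hsplit := jacobiSym.mul_right' ((a : ZMod n).val : ℤ)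
    (left_ne_zero_of_mul hn) (right_ne_zero_of_mul hn)
  rw [Nat.div_mul_cancel hd, hm, one_mul] at hsplit
  exact ⟨a.isUnit, hsplit⟩

theorem exists_modEq_one_and_jacobiSym_eq_neg_one {p k : ℕ} (hp : p.Prime) (hp2 : p ≠ 2)
    (hpk : p.Coprime k) : ∃ u : ℕ, u ≡ 1 [MOD k] ∧ jacobiSym u p = -1 := by
  have := Fact.mk hp
  obtain ⟨r, hr⟩ := FiniteField.exists_nonsquare (F := ZMod p) (by rwa [ZMod.ringChar_zmod_n])
  obtain ⟨u, hur, hu1⟩ := Nat.chineseRemainder hpk r.val 1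
  have hcast : (u : ZMod p) = r := by
    rw [(ZMod.natCast_eq_natCast_iff _ _ _).2 hur, ZMod.natCast_zmod_val]
  refine ⟨u, hu1, ?_⟩
  rwa [← jacobiSym.legendreSym.to_jacobiSym, legendreSym.eq_neg_one_iff, Int.cast_natCast, hcast]

theorem jacobiSym_eq_one_of_modEq_one {u q : ℕ} (hu : u ≡ 1 [MOD q]) : jacobiSym u q = 1 := by
  rw [← jacobiHom_natCast, (ZMod.natCast_eq_natCast_iff _ _ _).2 hu, Nat.cast_one, map_one]

theorem coprime_of_jacobiSym_ne_zero {a b : ℕ} [NeZero b] (h : jacobiSym a b ≠ 0) :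
    a.Coprime b := by
  by_contra hab
  exact h (jacobiSym.eq_zero_iff_not_coprime.2 (by rwa [Int.gcd_natCast_natCast]))

theorem exists_mem_stabilizer_and_jacobiUnitsHom_eq_neg_one {m n p : ℕ} [NeZero n]
    (hp : p.Prime) (hp2 : p ≠ 2) (hpm : p ∣ m) (hmn : m ∣ n) (hpn : p.Coprime (n / p))
    {x : ZMod n} (hx : p ∣ x.val) :
    ∃ u ∈ MulAction.stabilizer (ZMod n)ˣ x, jacobiUnitsHom hmn u = -1 := by
  have hn : p * (n / p) = n := Nat.mul_div_cancel' (hpm.trans hmn)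
  obtain ⟨v, hv1, hvp⟩ := exists_modEq_one_and_jacobiSym_eq_neg_one hp hp2 hpn
  have hv_fix : (v : ZMod n) * x = x := by
    obtain ⟨y, hy⟩ := hx
    have hmod : v * (p * y) ≡ p * y [MOD n] := by
      have h := (hv1.mul_left' p).mul_right y
      rw [hn] at h
      simpa only [mul_one, mul_assoc, mul_left_comm v] using h
    rw [← ZMod.natCast_zmod_val x, hy, ← Nat.cast_mul, (ZMod.natCast_eq_natCast_iff _ _ _).2 hmod]
  have hv_coprime : v.Coprime n := by
    have : NeZero p := ⟨hp.ne_zero⟩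
    rw [← hn]
    exact (coprime_of_jacobiSym_ne_zero (by rw [hvp]; decide)).mul_right
      (hv1.gcd_eq.trans (Nat.gcd_one_left _))
  have hv_jacobi : jacobiSym v m = -1 := by
    obtain ⟨q, rfl⟩ := hpm
    have hpq : p * q ≠ 0 := ne_zero_of_dvd_ne_zero (NeZero.ne n) hmn
    have hq : q ∣ n / p := Nat.dvd_div_of_mul_dvd hmn
    rw [jacobiSym.mul_right' _ hp.ne_zero (right_ne_zero_of_mul hpq), hvp,
      jacobiSym_eq_one_of_modEq_one (hv1.of_dvd hq), mul_one]
  refine ⟨ZMod.unitOfCoprime v hv_coprime, hv_fix, Units.ext ?_⟩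
  rw [Units.val_neg, Units.val_one, ← hv_jacobi, ← jacobiHom_natCast, ← map_natCast
    (ZMod.castHom hmn (ZMod m)), ← ZMod.coe_unitOfCoprime v hv_coprime]
  rfl

theorem map_jacobiUnitsHom_stabilizer_eq_top {m n p : ℕ} [NeZero n] (hp : p.Prime) (hp2 : p ≠ 2)
    (hpm : p ∣ m) (hmn : m ∣ n) (hpn : p.Coprime (n / p)) {x : ZMod n} (hx : p ∣ x.val) :
    (MulAction.stabilizer (ZMod n)ˣ x).map (jacobiUnitsHom hmn) = ⊤ := by
  refine (Subgroup.eq_top_iff' _).2 fun ε => ?_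
  rcases Int.units_eq_one_or ε with rfl | rfl
  · exact one_mem _
  · exact exists_mem_stabilizer_and_jacobiUnitsHom_eq_neg_one hp hp2 hpm hmn hpn hx

theorem coprime_div_of_dvd_of_squarefree_of_coprime {n d p : ℕ} (hd : d ∣ n)
    (hsf : Squarefree (n / d)) (hcop : (n / d).Coprime d) (hp : p ∣ n / d) :
    p.Coprime (n / p) := by
  obtain ⟨q, hq⟩ := hp
  rw [hq] at hsf hcop
  have hn : n = p * (q * d) := by rw [← mul_assoc, ← hq, Nat.div_mul_cancel hd]
  rcases p.eq_zero_or_pos with rfl | hp0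
  · exact absurd hsf (by rw [zero_mul]; exact not_squarefree_zero)
  rw [hn, Nat.mul_div_cancel_left _ hp0]
  exact (Nat.coprime_of_squarefree_mul hsf).mul_right hcop.coprime_mul_right

theorem exists_prime_dvd_val_of_not_isUnit_castHom {m n : ℕ} [NeZero n] (h : m ∣ n) {x : ZMod n}
    (hx : ¬ IsUnit (ZMod.castHom h (ZMod m) x)) : ∃ p : ℕ, p.Prime ∧ p ∣ m ∧ p ∣ x.val := by
  rw [ZMod.castHom_apply, ← ZMod.natCast_val, ZMod.isUnit_iff_coprime] at hx
  obtain ⟨p, hp, hpx, hpm⟩ := Nat.Prime.not_coprime_iff_dvd.1 hx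
  exact ⟨p, hp, hpm, hpx⟩

theorem exists_prime_forall_mem_iff_dvd_val {n : ℕ} [NeZero n] (M : Ideal (ZMod n))
    (hM : M.IsMaximal) : ∃ p : ℕ, p.Prime ∧ p ∣ n ∧ ∀ x : ZMod n, x ∈ M ↔ p ∣ x.val := by
  let := Ideal.Quotient.field M
  have mem_iff (k : ℕ) : (k : ZMod n) ∈ M ↔ ringChar (ZMod n ⧸ M) ∣ k := by
    rw [← Ideal.Quotient.eq_zero_iff_mem, map_natCast, ringChar.spec]
  refine ⟨_, CharP.char_is_prime (ZMod n ⧸ M) (ringChar (ZMod n ⧸ M)), ?_, fun x => ?_⟩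
  · rw [← mem_iff, ZMod.natCast_self]
    exact M.zero_mem
  · rw [← mem_iff, ZMod.natCast_zmod_val]

theorem exists_units_zmod_sum_smul_eq_zero {n : ℕ} (hodd : Odd n) {ι : Type*} [Fintype ι]
    (S : ι → ZMod n)
    (h2 : ∀ p : ℕ, p.Prime → p ∣ n → 2 ≤ {i | Nat.Coprime ((S i).val) p}.ncard) :
    ∃ a : ι → (ZMod n)ˣ, ∑ i, a i • S i = 0 := by
  have : NeZero n := ⟨hodd.pos.ne'⟩
  have h2_unit : IsUnit (2 : ZMod n) :=
    (ZMod.isUnit_iff_coprime 2 n).2 (Nat.coprime_two_left.2 hodd)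
  refine exists_units_sum_smul_eq_zero h2_unit S fun M hM => ?_
  obtain ⟨p, hp, hpn, hmem⟩ := exists_prime_forall_mem_iff_dvd_val M hM
  refine (Set.one_lt_ncard_iff_nontrivial.1 (h2 p hp hpn)).mono fun i hi => ?_
  rwa [Set.mem_ofPred_eq, hmem, ← hp.coprime_iff_not_dvd, Nat.coprime_comm]

theorem lset_zero_sum_general (n d : ℕ) (hodd : Odd n) (hd : d ∣ n) (hsf : Squarefree (n / d))
    (hcop : (n / d).Coprime d) {l : ℕ} (S : Fin l → ZMod n)
    (h2 : ∀ p : ℕ, p.Prime → p ∣ n → 2 ≤ {i : Fin l | Nat.Coprime ((S i).val) p}.ncard)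
    (h1 : {i : Fin l |
        IsUnit (ZMod.castHom (Nat.div_dvd_of_dvd hd) (ZMod (n / d)) (S i))}.ncard ≤ 1) :
    IsWZS (LSet n d) S := by
  have : NeZero n := ⟨hodd.pos.ne'⟩
  have hmn : n / d ∣ n := Nat.div_dvd_of_dvd hd
  obtain ⟨a, ha⟩ := exists_units_zmod_sum_smul_eq_zero hodd S h2
  have flippable (i : Fin l) (hi : ¬ IsUnit (ZMod.castHom hmn (ZMod (n / d)) (S i))) :
      (MulAction.stabilizer (ZMod n)ˣ (S i)).map (jacobiUnitsHom hmn) = ⊤ := by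
    obtain ⟨p, hp, hpm, hpS⟩ := exists_prime_dvd_val_of_not_isUnit_castHom hmn hi
    exact map_jacobiUnitsHom_stabilizer_eq_top hp (hodd.ne_two_of_dvd_nat (hpm.trans hmn))
      hpm hmn (coprime_div_of_dvd_of_squarefree_of_coprime hd hsf hcop hpm) hpS
  have exceptional_subsingleton :
      {i | (MulAction.stabilizer (ZMod n)ˣ (S i)).map (jacobiUnitsHom hmn) ≠ ⊤}.Subsingleton :=
    (Set.ncard_le_one_iff_subsingleton.1 h1).anti fun i hi => not_not.1 (mt (flippable i) hi)
  obtain ⟨b, hχb, hb⟩ :=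
    exists_map_eq_one_and_sum_smul_eq_zero (jacobiUnitsHom hmn) S exceptional_subsingleton a ha
  exact ⟨fun i => b i, fun i => mem_LSet_of_jacobiUnitsHom_eq_one hd (b i) (hχb i), hb⟩

theorem lset_zero_sum (n p' : ℕ) (hodd : Odd n) (hsf : Squarefree n)
    (hp' : p'.Prime) (hp'n : p' ∣ n)
    {l : ℕ} (S : Fin l → ZMod n)
    (h2 : ∀ p : ℕ, p.Prime → p ∣ n → 2 ≤ {i : Fin l | Nat.Coprime ((S i).val) p}.ncard)
    (h1 : {i : Fin l |
        IsUnit (ZMod.castHom (Nat.div_dvd_of_dvd hp'n) (ZMod (n / p')) (S i))}.ncard ≤ 1) :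
    IsWZS (LSet n p') S :=
  lset_zero_sum_general n p' hodd hp'n (hsf.squarefree_of_dvd (Nat.div_dvd_of_dvd hp'n))
    (Nat.coprime_of_squarefree_mul (by rwa [Nat.div_mul_cancel hp'n])) S h2 h1
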